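/- The polynomial Δ ∈ R is nonzero, and for every α ∈ K^I the curve C_α has at least one singular point if and only if Δ(α) = 0. In other words, the set of curves of type p,q that are singular is exactly the hypersurface {α ∈ K^I : Δ(α) = 0}. -/

import Mathlib

open MvPolynomial

set_option synthInstance.maxHeartbeats 1000000
set_option maxHeartbeats 1000000

def idxSet (p q : ℕ) : Finset (ℕ × ℕ) :=
  (Finset.range q ×ˢ Finset.range p).filter fun t => t.1 * p + t.2 * q < p * q

/-- `R = K[{A_νμ}]`, the polynomial ring in the indeterminates `A_νμ`, `(ν,μ) ∈ I`. -/
abbrev coefRing (K : Type) [Field K] (p q : ℕ) := MvPolynomial ↥(idxSet p q) K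

/-- `R[X,Y]`, with `X 0 = X` and `X 1 = Y`. -/
abbrev genRing (K : Type) [Field K] (p q : ℕ) := MvPolynomial (Fin 2) (coefRing K p q)

/-- The generic normed Weierstraß polynomial
`F = Y^p − X^q + Σ_{(ν,μ) ∈ I} A_νμ X^ν Y^μ ∈ R[X,Y]` of type `p,q`. -/
noncomputable def genF (K : Type) [Field K] (p q : ℕ) : genRing K p q :=
  X 1 ^ p - X 0 ^ q +
    ∑ i : idxSet p q, C (MvPolynomial.X i) * X 0 ^ (i : ℕ × ℕ).1 * X 1 ^ (i : ℕ × ℕ).2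

/-- The determinant `Δ ∈ R` of the `R`-linear endomorphism of `N = R[X,Y]/(F_X, F_Y)`
given by multiplication by the residue class of `F`. -/
noncomputable def genDelta (K : Type) [Field K] (p q : ℕ) : coefRing K p q :=
  LinearMap.det
    (LinearMap.mul (coefRing K p q)
      (genRing K p q ⧸ Ideal.span {pderiv 0 (genF K p q), pderiv 1 (genF K p q)})
      (Ideal.Quotient.mk (Ideal.span {pderiv 0 (genF K p q), pderiv 1 (genF K p q)})
        (genF K p q)))

/-- The normed Weierstraß polynomial `F_a = Y^p − X^q + Σ a_νμ X^ν Y^μ ∈ K[X,Y]`. -/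
noncomputable def wPoly (K : Type) [CommRing K] (p q : ℕ) (a : idxSet p q → K) :
    MvPolynomial (Fin 2) K :=
  X 1 ^ p - X 0 ^ q + ∑ i : idxSet p q, C (a i) * X 0 ^ (i : ℕ × ℕ).1 * X 1 ^ (i : ℕ × ℕ).2

/-- `P` is a singular point of the curve `G = 0`. -/
def IsSingAt (K : Type) [CommRing K] (G : MvPolynomial (Fin 2) K) (P : K × K) : Prop :=
  eval ![P.1, P.2] G = 0 ∧ eval ![P.1, P.2] (pderiv 0 G) = 0 ∧ eval ![P.1, P.2] (pderiv 1 G) = 0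

/-!
Give `X` weight `p` and `Y` weight `q`. Then `F` is `Y^p − X^q` plus terms of smaller weight, so up
to units the leading monomials of `F_X` and `F_Y` are `X^(q-1)` and `Y^(p-1)`. Replacing
`X^(q-1)` by `F_X` and `Y^(p-1)` by `F_Y` in every monomial is a unipotent `R`-linear automorphism
of `R[X,Y]` that carries the ideal `(X^(q-1), Y^(p-1))` onto `(F_X, F_Y)`; hence `N` is free of
finite rank. So `Δ`, the norm of `F`, commutes with specialization, and `Δ(α) = 0` iff `F_α` is not
a unit in the finite `K`-algebra `K[X,Y]/((F_α)_X, (F_α)_Y)`, iff it vanishes at some `K`-point of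
that algebra, which is a singular point of `C_α`. Finally `Δ ≠ 0` because `Y^p − X^q + 1 = 0` is
smooth.
-/

theorem bijective_of_exists_one_sub_pow_apply_eq_zero {R M : Type*} [Semiring R] [AddCommGroup M]
    [Module R M] (T : Module.End R M) (hT : ∀ x, ∃ n : ℕ, ((1 - T) ^ n) x = 0) :
    Function.Bijective T := by
  have hT1 : 1 - (1 - T) = T := sub_sub_cancel 1 T
  constructor
  · refine (injective_iff_map_eq_zero T).mpr fun x hx => ?_
    obtain ⟨n, hn⟩ := hT x
    have hgeom := LinearMap.congr_fun (geom_sum_mul_neg (1 - T) n) x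
    simpa [hT1, hx, hn] using hgeom.symm
  · intro y
    obtain ⟨n, hn⟩ := hT y
    have hgeom := LinearMap.congr_fun (mul_neg_geom_sum (1 - T) n) y
    exact ⟨(∑ k ∈ Finset.range n, (1 - T) ^ k) y, by simpa [hT1, hn] using hgeom⟩

theorem map_restrictScalars_span_range {ι R A B : Type*} [Finite ι] [CommSemiring R]
    [CommSemiring A] [Algebra R A] [CommSemiring B] [Algebra R B] {Φ : A →ₗ[R] B}
    (hΦ : Function.Surjective Φ) {a : ι → A} {b : ι → B} (hab : ∀ i x, Φ (a i * x) = b i * Φ x) :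
    ((Ideal.span (Set.range a)).restrictScalars R).map Φ =
      (Ideal.span (Set.range b)).restrictScalars R := by
  have := Fintype.ofFinite ι
  ext y
  simp only [Submodule.mem_map, Submodule.restrictScalars_mem,
    Ideal.mem_span_range_iff_exists_fun, ↓existsAndEq, true_and, map_sum, mul_comm _ (a _),
    mul_comm _ (b _), hab]
  exact (hΦ.comp_left.exists (p := fun c => ∑ i, b i * c i = y)).symm

section WeightedDegree

variable {σ R : Type*} [CommSemiring R] {w : σ → ℕ} {f g : MvPolynomial σ R}

/-- The submodule of polynomials all of whose monomials have `w`-weight less than `n`. -/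
noncomputable def weightedDegreeLT (R : Type*) [CommSemiring R] (w : σ → ℕ) (n : ℕ) :
    Submodule R (MvPolynomial σ R) :=
  restrictSupport R {d | Finsupp.weight w d < n}

theorem mem_weightedDegreeLT {n : ℕ} :
    f ∈ weightedDegreeLT R w n ↔ ∀ d, coeff d f ≠ 0 → Finsupp.weight w d < n := by
  simp only [← mem_support_iff]
  exact mem_restrictSupport_iff R

theorem weightedDegreeLT_zero : weightedDegreeLT R w 0 = ⊥ := by
  refine (Submodule.eq_bot_iff _).mpr fun f hf => ext _ _ fun d => ?_
  by_contra hd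
  exact Nat.not_lt_zero _ (mem_weightedDegreeLT.mp hf d hd)

theorem weightedDegreeLT_mono : Monotone (weightedDegreeLT R w) := fun _ _ hmn =>
  restrictSupport_mono R fun _ hd => lt_of_lt_of_le hd hmn

theorem exists_mem_weightedDegreeLT (w : σ → ℕ) (f : MvPolynomial σ R) :
    ∃ n, f ∈ weightedDegreeLT R w n :=
  ⟨f.support.sup (Finsupp.weight w) + 1, fun _ hd => Nat.lt_succ_of_le (Finset.le_sup hd)⟩

theorem mul_mem_weightedDegreeLT {m n : ℕ} (hf : f ∈ weightedDegreeLT R w (m + 1))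
    (hg : g ∈ weightedDegreeLT R w n) : f * g ∈ weightedDegreeLT R w (m + n) := by
  have hfg := Submodule.mul_mem_mul hf hg
  rw [weightedDegreeLT, weightedDegreeLT, ← restrictSupport_add] at hfg
  refine restrictSupport_mono R ?_ hfg
  rintro _ ⟨d, hd, e, he, rfl⟩
  simp only [Set.mem_ofPred_eq, map_add] at hd he ⊢
  omega

theorem pderiv_mem_weightedDegreeLT {i : σ} {n : ℕ} (hf : f ∈ weightedDegreeLT R w (n + w i)) :
    pderiv i f ∈ weightedDegreeLT R w n := by
  refine mem_weightedDegreeLT.mpr fun d hd => ?_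
  rw [coeff_pderiv] at hd
  simpa [Finsupp.weight_single] using mem_weightedDegreeLT.mp hf _ (left_ne_zero_of_mul hd)

end WeightedDegree

/-- `f` is monic with leading monomial `X ^ d`: it is that monomial plus terms of `w`-weight less
than the weight of `d`. -/
def HasLeadingMonomial {σ R : Type*} [CommRing R] (w : σ → ℕ) (d : σ →₀ ℕ)
    (f : MvPolynomial σ R) : Prop :=
  f - monomial d 1 ∈ weightedDegreeLT R w (Finsupp.weight w d)

namespace HasLeadingMonomial

variable {σ R : Type*} [CommRing R] {w : σ → ℕ} {d e : σ →₀ ℕ} {f g : MvPolynomial σ R}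

theorem monomial_one (w : σ → ℕ) (d : σ →₀ ℕ) : HasLeadingMonomial w d (monomial d (1 : R)) := by
  simp [HasLeadingMonomial]

theorem X_pow (w : σ → ℕ) (i : σ) (n : ℕ) :
    HasLeadingMonomial w (Finsupp.single i n) (X i ^ n : MvPolynomial σ R) := by
  rw [X_pow_eq_monomial]
  exact monomial_one w _

theorem mem_weightedDegreeLT (hf : HasLeadingMonomial w d f) :
    f ∈ weightedDegreeLT R w (Finsupp.weight w d + 1) := by
  have hlead : monomial d (1 : R) ∈ weightedDegreeLT R w (Finsupp.weight w d + 1) :=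
    (monomial_mem_restrictSupport R).mpr (.inl (Nat.lt_succ_self _))
  simpa using add_mem (weightedDegreeLT_mono (Nat.le_succ _) hf) hlead

theorem mul (hf : HasLeadingMonomial w d f) (hg : HasLeadingMonomial w e g) :
    HasLeadingMonomial w (d + e) (f * g) := by
  have hsplit : f * g - monomial (d + e) 1 =
      f * (g - monomial e 1) + monomial e 1 * (f - monomial d 1) := by
    rw [← one_mul (1 : R), ← monomial_mul, one_mul]
    ring
  rw [HasLeadingMonomial, hsplit, map_add]
  refine add_mem (mul_mem_weightedDegreeLT hf.mem_weightedDegreeLT hg) ?_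
  rw [add_comm]
  exact mul_mem_weightedDegreeLT (monomial_one w e).mem_weightedDegreeLT hf

theorem pow (hf : HasLeadingMonomial w d f) (n : ℕ) : HasLeadingMonomial w (n • d) (f ^ n) := by
  induction n with
  | zero => simpa using monomial_one (R := R) w 0
  | succ n ih => rw [pow_succ, succ_nsmul]; exact ih.mul hf

theorem prod {ι : Type*} (s : Finset ι) {d : ι → σ →₀ ℕ} {f : ι → MvPolynomial σ R}
    (hf : ∀ i, HasLeadingMonomial w (d i) (f i)) :
    HasLeadingMonomial w (∑ i ∈ s, d i) (∏ i ∈ s, f i) := by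
  classical
  induction s using Finset.induction_on with
  | empty => simpa using monomial_one (R := R) w 0
  | insert i s hi ih => rw [Finset.sum_insert hi, Finset.prod_insert hi]; exact (hf i).mul ih

theorem eq_one (hf : HasLeadingMonomial w 0 f) : f = 1 := by
  rw [HasLeadingMonomial, map_zero, weightedDegreeLT_zero] at hf
  exact sub_eq_zero.mp hf

end HasLeadingMonomial

section AdicExpansion

variable {σ R : Type*} [Fintype σ] [CommRing R] {m : σ → ℕ} {G : σ → MvPolynomial σ R}
  {w : σ → ℕ}

/-- The monomial `X ^ d` with every factor `X i ^ m i` in it replaced by `G i`; where `m i = 0`,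
`Nat` division by zero leaves `X i ^ d i` as it is. -/
noncomputable def adicMonomial (m : σ → ℕ) (G : σ → MvPolynomial σ R) (d : σ →₀ ℕ) :
    MvPolynomial σ R :=
  ∏ i, X i ^ (d i % m i) * G i ^ (d i / m i)

theorem hasLeadingMonomial_adicMonomial
    (hG : ∀ i, HasLeadingMonomial w (Finsupp.single i (m i)) (G i)) (d : σ →₀ ℕ) :
    HasLeadingMonomial w d (adicMonomial m G d) := by
  have hd : ∑ i, (Finsupp.single i (d i % m i) + (d i / m i) • Finsupp.single i (m i)) = d := by
    simp only [Finsupp.smul_single, smul_eq_mul, ← Finsupp.single_add, Nat.mod_add_div',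
      Finsupp.univ_sum_single]
  have hprod := HasLeadingMonomial.prod Finset.univ fun i =>
    (HasLeadingMonomial.X_pow w i (d i % m i)).mul ((hG i).pow (d i / m i))
  rwa [hd] at hprod

theorem adicMonomial_add_single {i : σ} (hG : m i = 0 → G i = 1) (d : σ →₀ ℕ) :
    adicMonomial m G (d + Finsupp.single i (m i)) = G i * adicMonomial m G d := by
  classical
  have hi : X i ^ ((d i + m i) % m i) * G i ^ ((d i + m i) / m i) =
      G i * (X i ^ (d i % m i) * G i ^ (d i / m i)) := by
    rcases Nat.eq_zero_or_pos (m i) with h0 | hpos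
    · simp [h0, hG h0]
    · rw [Nat.add_mod_right, Nat.add_div_right _ hpos]
      ring
  rw [adicMonomial, adicMonomial, Fintype.prod_eq_mul_prod_compl i,
    Fintype.prod_eq_mul_prod_compl i, ← mul_assoc (G i)]
  congr 1
  · simpa using hi
  · refine Finset.prod_congr rfl fun j hj => ?_
    have hji : i ≠ j := by simpa [eq_comm] using hj
    simp [Finsupp.single_eq_of_ne' hji]

/-- The `R`-linear endomorphism of `R[X]` that replaces every `X i ^ m i` by `G i`, monomial by
monomial. -/
noncomputable def adicMap (m : σ → ℕ) (G : σ → MvPolynomial σ R) :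
    Module.End R (MvPolynomial σ R) :=
  (basisMonomials σ R).constr R (adicMonomial m G)

theorem adicMap_monomial (d : σ →₀ ℕ) (c : R) :
    adicMap m G (monomial d c) = c • adicMonomial m G d := by
  have hd : monomial d c = c • basisMonomials σ R d := by simp [smul_monomial]
  rw [hd, map_smul, adicMap, Module.Basis.constr_basis]

theorem adicMap_X_pow_mul {i : σ} (hG : m i = 0 → G i = 1) (f : MvPolynomial σ R) :
    adicMap m G (X i ^ m i * f) = G i * adicMap m G f := by
  induction f using MvPolynomial.induction_on' with
  | monomial d c =>
    rw [X_pow_eq_monomial, monomial_mul, one_mul, add_comm, adicMap_monomial, adicMap_monomial,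
      adicMonomial_add_single hG, mul_smul_comm]
  | add f g hf hg => rw [mul_add, map_add, map_add, hf, hg, mul_add]

theorem one_sub_adicMap_mem_weightedDegreeLT
    (hG : ∀ i, HasLeadingMonomial w (Finsupp.single i (m i)) (G i)) {n : ℕ} {f : MvPolynomial σ R}
    (hf : f ∈ weightedDegreeLT R w (n + 1)) : (1 - adicMap m G) f ∈ weightedDegreeLT R w n := by
  rw [f.as_sum, map_sum]
  refine sum_mem fun d hd => ?_
  have hlow : monomial d 1 - adicMonomial m G d ∈ weightedDegreeLT R w n :=
    weightedDegreeLT_mono (Nat.lt_succ_iff.mp (hf hd)) (sub_mem_comm_iff.mp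
      (hasLeadingMonomial_adicMonomial hG d))
  have hd : (1 - adicMap m G) (monomial d (coeff d f)) =
      coeff d f • (monomial d 1 - adicMonomial m G d) := by
    simp [adicMap_monomial, smul_sub, smul_monomial]
  rw [hd]
  exact Submodule.smul_mem _ _ hlow

theorem bijective_adicMap (hG : ∀ i, HasLeadingMonomial w (Finsupp.single i (m i)) (G i)) :
    Function.Bijective (adicMap m G) := by
  have hnil : ∀ (n : ℕ), ∀ f ∈ weightedDegreeLT R w n, ((1 - adicMap m G) ^ n) f = 0 := by
    intro n
    induction n with
    | zero => intro f hf; simpa [weightedDegreeLT_zero] using hf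
    | succ n ih =>
      intro f hf
      rw [pow_succ, Module.End.mul_apply]
      exact ih _ (one_sub_adicMap_mem_weightedDegreeLT hG hf)
  refine bijective_of_exists_one_sub_pow_apply_eq_zero _ fun f => ?_
  obtain ⟨n, hn⟩ := exists_mem_weightedDegreeLT w f
  exact ⟨n, hnil n f hn⟩

theorem map_adicMap_span_range_X_pow
    (hG : ∀ i, HasLeadingMonomial w (Finsupp.single i (m i)) (G i)) :
    ((Ideal.span (Set.range fun i => (X i ^ m i : MvPolynomial σ R))).restrictScalars R).map
        (adicMap m G) = (Ideal.span (Set.range G)).restrictScalars R :=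
  map_restrictScalars_span_range (bijective_adicMap hG).surjective fun i =>
    adicMap_X_pow_mul fun hi => HasLeadingMonomial.eq_one (w := w) (by simpa [hi] using hG i)

/-- The linear isomorphism induced by `adicMap`, through which `R[X] / (G i)` inherits the
structure of the monomial quotient `R[X] / (X i ^ m i)`. -/
noncomputable def quotientSpanXPowEquiv
    (hG : ∀ i, HasLeadingMonomial w (Finsupp.single i (m i)) (G i)) :
    (MvPolynomial σ R ⧸ Ideal.span (Set.range fun i => (X i ^ m i : MvPolynomial σ R))) ≃ₗ[R]
      MvPolynomial σ R ⧸ Ideal.span (Set.range G) :=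
  (Submodule.Quotient.restrictScalarsEquiv R
      (Ideal.span (Set.range fun i => (X i ^ m i : MvPolynomial σ R)))).symm.trans <|
    (Submodule.Quotient.equiv _ _ (LinearEquiv.ofBijective (adicMap m G) (bijective_adicMap hG))
      (map_adicMap_span_range_X_pow hG)).trans <|
    Submodule.Quotient.restrictScalarsEquiv R (Ideal.span (Set.range G))

end AdicExpansion

section MonomialComplement

variable {σ R : Type*} [CommSemiring R]

theorem isCompl_restrictSupport_compl (s : Set (σ →₀ ℕ)) :
    IsCompl (restrictSupport R s) (restrictSupport R sᶜ) := by
  constructor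
  · refine Submodule.disjoint_def.mpr fun f hf hf' => support_eq_empty.mp ?_
    exact Finset.eq_empty_of_forall_notMem fun d hd => hf' hd (hf hd)
  · rw [codisjoint_iff, restrictSupport_eq_span, restrictSupport_eq_span, ← Submodule.span_union,
      ← Set.image_union, Set.union_compl_self, ← restrictSupport_eq_span, restrictSupport_univ]

theorem restrictScalars_span_range_X_pow (m : σ → ℕ) :
    (Ideal.span (Set.range fun i => (X i ^ m i : MvPolynomial σ R))).restrictScalars R =
      restrictSupport R {d | ∃ i, m i ≤ d i} := by
  ext f
  have hrange : (Set.range fun i => (X i ^ m i : MvPolynomial σ R)) =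
      (fun d => monomial d 1) '' Set.range fun i => Finsupp.single i (m i) := by
    rw [← Set.range_comp]
    exact congrArg Set.range (funext fun i => X_pow_eq_monomial)
  rw [Submodule.restrictScalars_mem, hrange, mem_ideal_span_monomial_image,
    mem_restrictSupport_iff]
  simp [Set.subset_def]

theorem finite_compl_setOf_exists_le [Finite σ] (m : σ → ℕ) :
    {d : σ →₀ ℕ | ∃ i, m i ≤ d i}ᶜ.Finite := by
  classical
  refine (Set.finite_Icc 0 (Finsupp.equivFunOnFinite.symm m)).subset fun d hd =>
    ⟨zero_le, fun i => ?_⟩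
  simp only [Set.mem_compl_iff, Set.mem_ofPred_eq, not_exists, not_le] at hd
  exact (hd i).le

theorem free_and_finite_quotient_span_range_X_pow {R : Type*} [CommRing R] [Finite σ]
    (m : σ → ℕ) :
    Module.Free R
        (MvPolynomial σ R ⧸ Ideal.span (Set.range fun i => (X i ^ m i : MvPolynomial σ R))) ∧
      Module.Finite R
        (MvPolynomial σ R ⧸ Ideal.span (Set.range fun i => (X i ^ m i : MvPolynomial σ R))) := by
  have : Finite ↑({d : σ →₀ ℕ | ∃ i, m i ≤ d i}ᶜ) := finite_compl_setOf_exists_le m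
  have e := Submodule.quotEquivOfEq _ _ (restrictScalars_span_range_X_pow (R := R) m) ≪≫ₗ
    Submodule.quotientEquivOfIsCompl _ _ (isCompl_restrictSupport_compl {d | ∃ i, m i ≤ d i})
  have b := (basisRestrictSupport R {d : σ →₀ ℕ | ∃ i, m i ≤ d i}ᶜ).map
    (e.symm ≪≫ₗ Submodule.Quotient.restrictScalarsEquiv R _)
  exact ⟨.of_basis b, .of_basis b⟩

theorem free_and_finite_quotient_span_range {R : Type*} [CommRing R] [Finite σ] {w m : σ → ℕ}
    {G : σ → MvPolynomial σ R}
    (hG : ∀ i, HasLeadingMonomial w (Finsupp.single i (m i)) (G i)) :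
    Module.Free R (MvPolynomial σ R ⧸ Ideal.span (Set.range G)) ∧
      Module.Finite R (MvPolynomial σ R ⧸ Ideal.span (Set.range G)) := by
  have := Fintype.ofFinite σ
  obtain ⟨_, _⟩ := free_and_finite_quotient_span_range_X_pow (R := R) m
  exact ⟨.of_equiv (quotientSpanXPowEquiv hG), .equiv (quotientSpanXPowEquiv hG)⟩

end MonomialComplement

section JacobianRing

variable {σ R : Type*} [CommRing R]

/-- The ideal generated by the partial derivatives of `F`. -/
noncomputable def jacobianIdeal (F : MvPolynomial σ R) : Ideal (MvPolynomial σ R) :=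
  Ideal.span (Set.range fun i => pderiv i F)

theorem span_range_C_mul {ι : Type*} {u : ι → R} (hu : ∀ i, IsUnit (u i))
    (f : ι → MvPolynomial σ R) :
    Ideal.span (Set.range fun i => C (u i) * f i) = Ideal.span (Set.range f) := by
  simp only [Ideal.span_range_eq_iSup, Ideal.span_singleton_mul_left_unit ((hu _).map C)]

variable [Fintype σ] {w n : σ → ℕ} {c : σ → R} {N : ℕ} {F : MvPolynomial σ R}

/-- The Brieskorn–Pham polynomial `∑ i, c i * X i ^ n i`. -/
noncomputable def brieskornPham (n : σ → ℕ) (c : σ → R) : MvPolynomial σ R :=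
  ∑ i, monomial (Finsupp.single i (n i)) (c i)

theorem pderiv_brieskornPham (n : σ → ℕ) (c : σ → R) (i : σ) :
    pderiv i (brieskornPham n c) = monomial (Finsupp.single i (n i - 1)) (c i * n i) := by
  rw [brieskornPham, map_sum, Fintype.sum_eq_single i fun j hj => ?_, pderiv_monomial_single]
  rw [pderiv_monomial, Finsupp.single_eq_of_ne' hj]
  simp

theorem hasLeadingMonomial_C_mul_pderiv {i : σ} {u : R} (hu : u * (c i * n i) = 1)
    (hN : n i * w i = N) (hF : F - brieskornPham n c ∈ weightedDegreeLT R w N) :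
    HasLeadingMonomial w (Finsupp.single i (n i - 1)) (C u * pderiv i F) := by
  rcases subsingleton_or_nontrivial R with _ | _
  · rw [HasLeadingMonomial, Subsingleton.elim (C u * _ - _) 0]
    exact zero_mem _
  have hn : n i ≠ 0 := fun h => by simp [h] at hu
  have hw : Finsupp.weight w (Finsupp.single i (n i - 1)) + w i = N := by
    rw [Finsupp.weight_single, smul_eq_mul, ← Nat.succ_mul, Nat.succ_eq_add_one,
      Nat.sub_one_add_one hn, hN]
  have hlow : pderiv i F - monomial (Finsupp.single i (n i - 1)) (c i * n i) ∈
      weightedDegreeLT R w (Finsupp.weight w (Finsupp.single i (n i - 1))) := by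
    rw [← pderiv_brieskornPham, ← map_sub]
    exact pderiv_mem_weightedDegreeLT (hw ▸ hF)
  have hscale : C u * pderiv i F - monomial (Finsupp.single i (n i - 1)) 1 =
      u • (pderiv i F - monomial (Finsupp.single i (n i - 1)) (c i * n i)) := by
    rw [smul_sub, smul_monomial, smul_eq_mul, hu, smul_eq_C_mul]
  rw [HasLeadingMonomial, hscale]
  exact Submodule.smul_mem _ u hlow

theorem free_and_finite_quotient_jacobianIdeal (hc : ∀ i, IsUnit (c i * n i : R))
    (hN : ∀ i, n i * w i = N) (hF : F - brieskornPham n c ∈ weightedDegreeLT R w N) :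
    Module.Free R (MvPolynomial σ R ⧸ jacobianIdeal F) ∧
      Module.Finite R (MvPolynomial σ R ⧸ jacobianIdeal F) := by
  choose u hu using fun i => (hc i).exists_left_inv
  rw [jacobianIdeal, ← span_range_C_mul (fun i => .of_mul_eq_one _ (hu i))]
  exact free_and_finite_quotient_span_range fun i =>
    hasLeadingMonomial_C_mul_pderiv (hu i) (hN i) hF

end JacobianRing

section Norm

open TensorProduct

variable {R K : Type*} [CommRing R] [Field K] [IsAlgClosed K]

theorem isUnit_iff_forall_algHom_ne_zero {A : Type*} [CommRing A] [Algebra K A]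
    [Algebra.IsIntegral K A] {f : A} : IsUnit f ↔ ∀ φ : A →ₐ[K] K, φ f ≠ 0 := by
  refine ⟨fun hf φ => (hf.map φ).ne_zero, fun h => ?_⟩
  by_contra hf
  obtain ⟨I, hI, hfI⟩ := exists_max_ideal_of_mem_nonunits hf
  let _ : Field (A ⧸ I) := Ideal.Quotient.field I
  let φ : A ⧸ I →ₐ[K] K := IsAlgClosed.lift
  refine h (φ.comp (Ideal.Quotient.mkₐ K I)) ?_
  simp [Ideal.Quotient.eq_zero_iff_mem.mpr hfI]

variable [Algebra R K]

theorem algebraMap_norm_eq_zero_iff {A : Type*} [CommRing A] [Algebra R A] [Module.Free R A]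
    [Module.Finite R A] (f : A) :
    algebraMap R K (Algebra.norm R f) = 0 ↔ ∃ φ : A →ₐ[R] K, φ f = 0 := by
  have hbase : algebraMap R K (Algebra.norm R f) = Algebra.norm K (1 ⊗ₜ[R] f : K ⊗[R] A) := by
    rw [Algebra.norm_apply, Algebra.norm_apply, ← LinearMap.det_baseChange, Algebra.baseChange_lmul]
  have hunit : IsUnit (1 ⊗ₜ[R] f : K ⊗[R] A) ↔ algebraMap R K (Algebra.norm R f) ≠ 0 := by
    rw [hbase, Algebra.norm_apply, ← isUnit_iff_ne_zero, ← LinearMap.isUnit_iff_isUnit_det,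
      Algebra.lmul_isUnit_iff]
  rw [← not_iff_not, ← ne_eq, ← hunit, isUnit_iff_forall_algHom_ne_zero (K := K), not_exists]
  constructor
  · intro h φ hφ
    exact h (Algebra.TensorProduct.lift (Algebra.ofId K K) φ fun _ _ => .all _ _)
      (by simpa using hφ)
  · intro h ψ hψ
    exact h ((ψ.restrictScalars R).comp Algebra.TensorProduct.includeRight) (by simpa using hψ)

variable {σ : Type*}

theorem exists_algHom_quotient_mk_eq_zero_iff {S : Type*} [CommRing S] [Algebra R S]
    {I : Ideal (MvPolynomial σ R)} {f : MvPolynomial σ R} :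
    (∃ φ : (MvPolynomial σ R ⧸ I) →ₐ[R] S, φ (Ideal.Quotient.mk I f) = 0) ↔
      ∃ x : σ → S, aeval x f = 0 ∧ I ≤ RingHom.ker (aeval x : MvPolynomial σ R →ₐ[R] S) := by
  constructor
  · rintro ⟨φ, hφ⟩
    have hx := aeval_unique (φ.comp (Ideal.Quotient.mkₐ R I))
    refine ⟨φ.comp (Ideal.Quotient.mkₐ R I) ∘ X, ?_, fun g hg => ?_⟩
    · rwa [← hx]
    · rw [RingHom.mem_ker, ← hx]
      simp [Ideal.Quotient.eq_zero_iff_mem.mpr hg]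
  · rintro ⟨x, hxf, hxI⟩
    exact ⟨Ideal.Quotient.liftₐ I (aeval x) hxI, hxf⟩

theorem algebraMap_norm_mk_jacobianIdeal_eq_zero_iff {F : MvPolynomial σ R}
    [Module.Free R (MvPolynomial σ R ⧸ jacobianIdeal F)]
    [Module.Finite R (MvPolynomial σ R ⧸ jacobianIdeal F)] :
    algebraMap R K (Algebra.norm R (Ideal.Quotient.mk (jacobianIdeal F) F)) = 0 ↔
      ∃ x : σ → K, aeval x F = 0 ∧ ∀ i, aeval x (pderiv i F) = 0 := by
  rw [algebraMap_norm_eq_zero_iff, exists_algHom_quotient_mk_eq_zero_iff]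
  simp [jacobianIdeal, Ideal.span_le, Set.range_subset_iff]

end Norm

section Weierstrass

variable {p q : ℕ}

theorem map_wPoly {R S : Type} [CommRing R] [CommRing S] (f : R →+* S) (a : idxSet p q → R) :
    map f (wPoly R p q a) = wPoly S p q (f ∘ a) := by
  simp [wPoly]

theorem wPoly_sub_mem_weightedDegreeLT {R : Type} [CommRing R] (a : idxSet p q → R) :
    wPoly R p q a - brieskornPham ![q, p] ![-1, 1] ∈ weightedDegreeLT R ![p, q] (p * q) := by
  have hlower : wPoly R p q a - brieskornPham ![q, p] ![-1, 1] =
      ∑ i : idxSet p q, monomial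
        (Finsupp.single 0 (i : ℕ × ℕ).1 + Finsupp.single 1 (i : ℕ × ℕ).2) (a i) := by
    simp only [wPoly, brieskornPham, X_pow_eq_monomial, C_mul_monomial, monomial_mul, mul_one,
      Fin.sum_univ_two, Matrix.cons_val_zero, Matrix.cons_val_one, map_neg]
    ring
  rw [hlower]
  refine sum_mem fun i _ => (monomial_mem_restrictSupport R).mpr (.inl ?_)
  simpa [Finsupp.weight_single] using (Finset.mem_filter.mp i.2).2

theorem free_and_finite_quotient_jacobianIdeal_wPoly {R : Type} [CommRing R] (hp : IsUnit (p : R))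
    (hq : IsUnit (q : R)) (a : idxSet p q → R) :
    Module.Free R (MvPolynomial (Fin 2) R ⧸ jacobianIdeal (wPoly R p q a)) ∧
      Module.Finite R (MvPolynomial (Fin 2) R ⧸ jacobianIdeal (wPoly R p q a)) :=
  free_and_finite_quotient_jacobianIdeal (n := ![q, p])
    (Fin.forall_fin_two.mpr ⟨by simpa using hq, by simpa using hp⟩)
    (Fin.forall_fin_two.mpr ⟨mul_comm q p, rfl⟩) (wPoly_sub_mem_weightedDegreeLT a)

theorem exists_isSingAt_iff {K : Type} [CommRing K] {G : MvPolynomial (Fin 2) K} :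
    (∃ P : K × K, IsSingAt K G P) ↔
      ∃ x : Fin 2 → K, eval x G = 0 ∧ ∀ i, eval x (pderiv i G) = 0 := by
  simp only [IsSingAt, Fin.forall_fin_two]
  exact (finTwoArrowEquiv K).symm.exists_congr fun _ => Iff.rfl

theorem wPoly_single_zero {R : Type} [CommRing R] (hp : 0 < p) (hq : 0 < q) :
    (wPoly R p q fun i => if (i : ℕ × ℕ) = 0 then 1 else 0) = X 1 ^ p - X 0 ^ q + 1 := by
  have hmem : (0 : ℕ × ℕ) ∈ idxSet p q := by simp [idxSet, hp, hq]
  rw [wPoly, Fintype.sum_eq_single ⟨0, hmem⟩ fun i hi => ?_]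
  · simp
  · simp [Subtype.coe_ne_coe.mpr hi]

theorem not_isSingAt_X_pow_sub_X_pow_add_one {R : Type} [CommRing R] [IsDomain R]
    (hp : (p : R) ≠ 0) (hq : (q : R) ≠ 0) (P : R × R) :
    ¬ IsSingAt R (X 1 ^ p - X 0 ^ q + 1) P := by
  rintro ⟨hF, hX, hY⟩
  have hx : P.1 ^ (q - 1) = 0 := by simpa [pderiv_X, hq] using hX
  have hy : P.2 ^ (p - 1) = 0 := by simpa [pderiv_X, hp] using hY
  have hxq : P.1 ^ q = 0 := pow_eq_zero_of_le (Nat.sub_le q 1) hx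
  have hyp : P.2 ^ p = 0 := pow_eq_zero_of_le (Nat.sub_le p 1) hy
  simp [hxq, hyp] at hF

variable {K : Type} [Field K]

theorem genF_eq_wPoly : genF K p q = wPoly (coefRing K p q) p q MvPolynomial.X :=
  rfl

theorem map_eval_genF (a : idxSet p q → K) : map (eval a) (genF K p q) = wPoly K p q a := by
  rw [genF_eq_wPoly, map_wPoly]
  congr 1
  ext i
  simp

theorem genDelta_eq_norm : genDelta K p q =
    Algebra.norm _ (Ideal.Quotient.mk (jacobianIdeal (genF K p q)) (genF K p q)) := by
  have hspan : Ideal.span {pderiv 0 (genF K p q), pderiv 1 (genF K p q)} =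
      jacobianIdeal (genF K p q) := by
    rw [jacobianIdeal]
    congr 1
    ext g
    simp [Fin.exists_fin_two, eq_comm]
  rw [← hspan]
  rfl

theorem exists_isSingAt_iff_eval_genDelta_eq_zero [IsAlgClosed K] (hp : (p : K) ≠ 0)
    (hq : (q : K) ≠ 0) (a : idxSet p q → K) :
    (∃ P : K × K, IsSingAt K (wPoly K p q a) P) ↔ eval a (genDelta K p q) = 0 := by
  let _ : Algebra (coefRing K p q) K := (eval a).toAlgebra
  have haeval (x : Fin 2 → K) (g : genRing K p q) : aeval x g = eval x (map (eval a) g) := by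
    rw [eval_map]
    rfl
  have hunit {n : ℕ} (hn : (n : K) ≠ 0) : IsUnit (n : coefRing K p q) := by
    simpa using hn.isUnit.map (C : K →+* coefRing K p q)
  obtain ⟨_, _⟩ : Module.Free (coefRing K p q) (genRing K p q ⧸ jacobianIdeal (genF K p q)) ∧
      Module.Finite (coefRing K p q) (genRing K p q ⧸ jacobianIdeal (genF K p q)) :=
    free_and_finite_quotient_jacobianIdeal_wPoly (hunit hp) (hunit hq) _
  have hnorm := algebraMap_norm_mk_jacobianIdeal_eq_zero_iff (K := K) (F := genF K p q)
  simp only [← genDelta_eq_norm, haeval, ← pderiv_map, map_eval_genF] at hnorm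
  exact exists_isSingAt_iff.trans hnorm.symm

theorem singular_locus_is_hypersurface_delta_general (K : Type) [Field K] [IsAlgClosed K]
    (p q : ℕ) (hp : (p : K) ≠ 0) (hq : (q : K) ≠ 0) :
    genDelta K p q ≠ 0 ∧
    ∀ a : idxSet p q → K,
      (∃ P : K × K, IsSingAt K (wPoly K p q a) P) ↔ eval a (genDelta K p q) = 0 := by
  have hp0 : 0 < p := Nat.pos_of_ne_zero fun h => hp (by simp [h])
  have hq0 : 0 < q := Nat.pos_of_ne_zero fun h => hq (by simp [h])
  refine ⟨fun hΔ => ?_, exists_isSingAt_iff_eval_genDelta_eq_zero hp hq⟩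
  obtain ⟨P, hP⟩ := (exists_isSingAt_iff_eval_genDelta_eq_zero (K := K) hp hq
    fun i => if (i : ℕ × ℕ) = 0 then 1 else 0).mpr (by rw [hΔ, map_zero])
  rw [wPoly_single_zero hp0 hq0] at hP
  exact not_isSingAt_X_pow_sub_X_pow_add_one hp hq P hP

end Weierstrass

/-- `Δ ≠ 0`, and the singular curves of type `p,q` are exactly the points of the
hypersurface `Δ = 0`: `C_a` has a singular point iff `Δ(a) = 0`. -/
theorem singular_locus_is_hypersurface_delta
    (K : Type) [Field K] [IsAlgClosed K] [CharZero K]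
    (p q : ℕ) (hp : 1 < p) (hpq : p < q) (hco : Nat.Coprime p q) :
    genDelta K p q ≠ 0 ∧
    ∀ a : idxSet p q → K,
      (∃ P : K × K, IsSingAt K (wPoly K p q a) P) ↔ eval a (genDelta K p q) = 0 :=
  singular_locus_is_hypersurface_delta_general K p q (Nat.cast_ne_zero.mpr (by omega))
    (Nat.cast_ne_zero.mpr (by omega))
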